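/- arXiv:1906.00315 — 2 statements merged into one kernel-verified Lean document; each statement's English description precedes it below -/
import Mathlib

section
/- Let σ > 1 and μ > 0 be real numbers, let a, c ∈ ℂ satisfy σ(σ−1)μ²|c|² ≤ μ/4, and let H, R ∈ ℝ. If σ·|a − μc|² − (H − μ/2) + R ≤ 0, then μ/4 + (σ−1)·|a|² − H + R ≤ 0. -/
/-! With `b = μ c`, completing the square gives
`σ|a - b|² + σ(σ-1)|b|² - (σ-1)|a|² = |a - σ b|² ≥ 0`.
Hence `(σ-1)|a|² ≤ σ|a - b|² + μ/4`, since `σ(σ-1)|b|² ≤ μ/4`, and the quarter of `μ` left over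
from the `μ/2` in the hypothesis is the one in the conclusion. -/

/-- pointwise algebraic step in strengthening the Diederich–Fornæss
inequality. Let `σ > 1`, `μ > 0`, `a c : ℂ` with `σ(σ-1)μ²|c|² ≤ μ/4`, and `H R : ℝ`.
If `σ|a - μc|² - (H - μ/2) + R ≤ 0`, then `μ/4 + (σ-1)|a|² - H + R ≤ 0`. -/
theorem statement4 (σ μ : ℝ) (hσ : 1 < σ) (hμ : 0 < μ) (a c : ℂ)
    (hc : σ * (σ - 1) * μ ^ 2 * Complex.normSq c ≤ μ / 4) (H R : ℝ)
    (h : σ * Complex.normSq (a - (μ : ℂ) * c) - (H - μ / 2) + R ≤ 0) :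
    μ / 4 + (σ - 1) * Complex.normSq a - H + R ≤ 0 := by
  have hsq := Complex.normSq_nonneg (a - (σ : ℂ) * ((μ : ℂ) * c))
  simp only [Complex.normSq_apply, Complex.sub_re, Complex.sub_im, Complex.re_ofReal_mul,
    Complex.im_ofReal_mul] at *
  linarith
end

section
/- Let U ⊆ ℂⁿ be open and δ : U → ℝ be C² with ∑_j |∂δ/∂z_j|² > 0 on U. Define the complex normal coefficient field N : U → ℂⁿ by N_i := (∑_j |∂δ/∂z_j|²)^{-1}·(∂δ/∂z̄_i). Then for every p ∈ U and every v ∈ ℂⁿ with ∑_j v_j (∂δ/∂z_j)(p) = 0 (a complex-tangential direction), one has ∑_i (∑_j v_j (∂N_i/∂z_j)(p))·conj(v_i) = (∑_j |(∂δ/∂z_j)(p)|²)^{-1} · H_δ(p; v). In particular, g(∇_v L_n, v)(p) = 0 whenever the Levi form H_δ(p; v) vanishes in the tangential direction v. -/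
/-!
Write `N_i = s · ∂δ/∂z̄_i` with `s = (∑_j |∂δ/∂z_j|²)⁻¹`. By the Leibniz rule,
`∑_i (∑_j v_j ∂N_i/∂z_j) conj(v_i)` is `s · H_δ(p; v)` plus
`(∑_j v_j ∂s/∂z_j) · (∑_i ∂δ/∂z̄_i conj(v_i))`. As `δ` is real, `∂δ/∂z̄_i = conj(∂δ/∂z_i)`
(`dzbar_ofReal`), so the last factor is the conjugate of `∑_i v_i ∂δ/∂z_i`, which vanishes because
`v` is complex-tangential. The Leibniz rule (`dz_mul`) applies since first Wirtinger derivatives of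
a `C²` function are real differentiable and the denominator of `s` is nonzero at `p`.
-/


noncomputable section
open Complex Finset

/-- The `j`-th standard basis vector of `ℂⁿ`. -/
def bvec (n : ℕ) (j : Fin n) : Fin n → ℂ := fun k => if k = j then 1 else 0

/-- Wirtinger derivative `∂f/∂z_j`, via the real Fréchet derivative. -/
def dz (n : ℕ) (f : (Fin n → ℂ) → ℂ) (j : Fin n) (z : Fin n → ℂ) : ℂ :=
  (1 / 2) * (fderiv ℝ f z (bvec n j) - Complex.I * fderiv ℝ f z (Complex.I • bvec n j))

/-- Wirtinger derivative `∂f/∂z̄_j`. -/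
def dzbar (n : ℕ) (f : (Fin n → ℂ) → ℂ) (j : Fin n) (z : Fin n → ℂ) : ℂ :=
  (1 / 2) * (fderiv ℝ f z (bvec n j) + Complex.I * fderiv ℝ f z (Complex.I • bvec n j))

/-- Hermitian pairing `g(X,Y) = ∑ X_j conj (Y_j)`. -/
def herm (n : ℕ) (X Y : Fin n → ℂ) : ℂ := ∑ j, X j * (starRingEnd ℂ) (Y j)

/-- Complex Hessian `H_f(z;v) = ∑_{j,k} (∂²f/∂z_j∂z̄_k)(z) v_j conj(v_k)`. -/
def hessian (n : ℕ) (f : (Fin n → ℂ) → ℂ) (z v : Fin n → ℂ) : ℂ :=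
  ∑ j, ∑ k, v j * (starRingEnd ℂ) (v k) * dz n (fun w => dzbar n f k w) j z

/-- The coefficients `N_i = (∑_j |∂f/∂z_j|²)⁻¹ ∂f/∂z̄_i` of the complex normal field
associated to a real function `f` (viewed as complex-valued). -/
def normalOf (n : ℕ) (f : (Fin n → ℂ) → ℂ) (z : Fin n → ℂ) : Fin n → ℂ := fun i =>
  (((∑ j, Complex.normSq (dz n f j z))⁻¹ : ℝ) : ℂ) * dzbar n f i z

lemma dz_mul {n : ℕ} {f g : (Fin n → ℂ) → ℂ} {p : Fin n → ℂ}
    (hf : DifferentiableAt ℝ f p) (hg : DifferentiableAt ℝ g p) (j : Fin n) :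
    dz n (fun w => f w * g w) j p = dz n f j p * g p + f p * dz n g j p := by
  simp only [dz, fderiv_fun_mul hf hg, add_apply,
    smul_apply, smul_eq_mul]
  ring

/-- For a real function, `∂δ/∂z̄_j` is the conjugate of `∂δ/∂z_j`. -/
lemma dzbar_ofReal {n : ℕ} {δ : (Fin n → ℂ) → ℝ} {p : Fin n → ℂ}
    (hδ : DifferentiableAt ℝ δ p) (j : Fin n) :
    dzbar n (fun x => ((δ x : ℝ) : ℂ)) j p
      = (starRingEnd ℂ) (dz n (fun x => ((δ x : ℝ) : ℂ)) j p) := by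
  have h : fderiv ℝ (fun x => ((δ x : ℝ) : ℂ)) p = Complex.ofRealCLM.comp (fderiv ℝ δ p) :=
    (Complex.ofRealCLM.hasFDerivAt.comp p hδ.hasFDerivAt).fderiv
  simp [dz, dzbar, h, Complex.conj_ofNat]

lemma differentiableAt_fderiv_apply {n : ℕ} {f : (Fin n → ℂ) → ℂ} {p : Fin n → ℂ}
    (hf : ContDiffAt ℝ 2 f p) (u : Fin n → ℂ) :
    DifferentiableAt ℝ (fun w => fderiv ℝ f w u) p :=
  ((hf.fderiv_right (m := 1) (by norm_num)).differentiableAt (by norm_num)).clm_apply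
    (differentiableAt_const u)

lemma differentiableAt_dz {n : ℕ} {f : (Fin n → ℂ) → ℂ} {p : Fin n → ℂ}
    (hf : ContDiffAt ℝ 2 f p) (j : Fin n) : DifferentiableAt ℝ (dz n f j) p :=
  ((differentiableAt_fderiv_apply hf _).sub
    ((differentiableAt_fderiv_apply hf _).const_mul _)).const_mul _

lemma differentiableAt_dzbar {n : ℕ} {f : (Fin n → ℂ) → ℂ} {p : Fin n → ℂ}
    (hf : ContDiffAt ℝ 2 f p) (j : Fin n) : DifferentiableAt ℝ (dzbar n f j) p :=
  ((differentiableAt_fderiv_apply hf _).add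
    ((differentiableAt_fderiv_apply hf _).const_mul _)).const_mul _

/-- The scalar factor `(∑_j |∂f/∂z_j|²)⁻¹` of the normal field is real differentiable wherever `f`
is `C²` with nonvanishing `(1,0)`-gradient. -/
lemma differentiableAt_normalFactor {n : ℕ} {f : (Fin n → ℂ) → ℂ} {p : Fin n → ℂ}
    (hf : ContDiffAt ℝ 2 f p) (h0 : (∑ j, Complex.normSq (dz n f j p)) ≠ 0) :
    DifferentiableAt ℝ (fun w => (((∑ j, Complex.normSq (dz n f j w))⁻¹ : ℝ) : ℂ)) p := by
  have h1 : DifferentiableAt ℝ (fun w => ∑ j, Complex.normSq (dz n f j w)) p := by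
    refine DifferentiableAt.fun_sum fun j _ => ?_
    simp only [Complex.normSq_eq_norm_sq]
    exact (differentiableAt_dz hf j).norm_sq ℝ
  exact Complex.ofRealCLM.differentiableAt.comp p (h1.inv h0)

/-- For a `C²` real `δ` on an open `U ⊆ ℂⁿ` with `∑_j |∂δ/∂z_j|² > 0`, the
normal field `N_i = (∑_j |∂δ/∂z_j|²)⁻¹ ∂δ/∂z̄_i` satisfies, for every complex-tangential
direction `v` at `p ∈ U`,
`∑_i (∑_j v_j ∂N_i/∂z_j)(p) conj(v_i) = (∑_j |∂δ/∂z_j(p)|²)⁻¹ H_δ(p; v)`.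
In particular `g(∇_v L_n, v)(p) = 0` whenever the Levi form `H_δ(p;v)` vanishes. -/
theorem statement7 (n : ℕ) (U : Set (Fin n → ℂ)) (hU : IsOpen U)
    (δ : (Fin n → ℂ) → ℝ) (hδ : ContDiffOn ℝ 2 δ U)
    (hpos : ∀ z ∈ U, 0 < ∑ j, Complex.normSq (dz n (fun x => ((δ x : ℝ) : ℂ)) j z)) :
    ∀ p ∈ U, ∀ v : Fin n → ℂ,
      (∑ j, v j * dz n (fun x => ((δ x : ℝ) : ℂ)) j p) = 0 →
      ∑ i, (∑ j, v j * dz n (fun w => normalOf n (fun x => ((δ x : ℝ) : ℂ)) w i) j p)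
          * (starRingEnd ℂ) (v i)
        = (((∑ j, Complex.normSq (dz n (fun x => ((δ x : ℝ) : ℂ)) j p))⁻¹ : ℝ) : ℂ)
            * hessian n (fun x => ((δ x : ℝ) : ℂ)) p v := by
  intro p hp v hv
  have hδp : ContDiffAt ℝ 2 δ p := hδ.contDiffAt (hU.mem_nhds hp)
  have hf : ContDiffAt ℝ 2 (fun x => ((δ x : ℝ) : ℂ)) p :=
    Complex.ofRealCLM.contDiff.contDiffAt.comp p hδp
  have hbar := fun i => dzbar_ofReal (hδp.differentiableAt (by norm_num)) i
  have hs := differentiableAt_normalFactor hf (hpos p hp).ne'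
  generalize (fun x => ((δ x : ℝ) : ℂ)) = f at *
  have hN : ∀ i j, dz n (fun w => normalOf n f w i) j p
      = dz n (fun w => (((∑ j, Complex.normSq (dz n f j w))⁻¹ : ℝ) : ℂ)) j p * dzbar n f i p
        + (((∑ j, Complex.normSq (dz n f j p))⁻¹ : ℝ) : ℂ) * dz n (dzbar n f i) j p :=
    fun i j => dz_mul hs (differentiableAt_dzbar hf i) j
  -- The conjugate of the tangency condition kills the derivative of the scalar factor.
  have hv' : ∑ i, dzbar n f i p * (starRingEnd ℂ) (v i) = 0 := by
    have := congrArg (starRingEnd ℂ) hv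
    simpa [hbar, map_sum, mul_comm] using this
  simp only [hN, hessian]
  generalize (((∑ j, Complex.normSq (dz n f j p))⁻¹ : ℝ) : ℂ) = c
  generalize (fun w => (((∑ j, Complex.normSq (dz n f j w))⁻¹ : ℝ) : ℂ)) = s
  calc _ = (∑ j, v j * dz n s j p) * (∑ i, dzbar n f i p * (starRingEnd ℂ) (v i))
        + c * ∑ i, ∑ j, v j * (starRingEnd ℂ) (v i) * dz n (dzbar n f i) j p := by
        simp only [Finset.mul_sum, Finset.sum_mul, ← Finset.sum_add_distrib]
        exact Finset.sum_congr rfl fun i _ => Finset.sum_congr rfl fun j _ => by ring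
    _ = _ := by rw [hv', mul_zero, zero_add, Finset.sum_comm]
end
end
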